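/- arXiv:1110.6653 — 3 statements merged into one kernel-verified Lean document; each statement's English description precedes it below -/
import Mathlib

section
/- Let n, m, t be integers with t ≥ 2, m ≥ 1 and m·t < n, and let N denote the number of m-element t-sparse subsets of ℤ/nℤ. Then (n − m·t)·N = n·C(n − m·t, m); equivalently, N = (n/(n − m·t))·C(n − m·t, m). -/
/-- A subset `C` of `ℤ/nℤ` is `t`-sparse if for every `c ∈ C` and every `1 ≤ k ≤ t`
one has `c + k ∉ C`. -/
def TSparse (n t : ℕ) (C : Finset (ZMod n)) : Prop :=
  ∀ c ∈ C, ∀ k : ℕ, 1 ≤ k → k ≤ t → c + (k : ZMod n) ∉ C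

/-!
Count the pairs `(S, z)` in which `S` is a `t`-sparse `m`-subset of `ℤ/nℤ` and `z` is not among the
`t` successors of any element of `S`. The successor blocks of distinct elements of `S` are disjoint,
so every `S` allows exactly `n - m * t` such `z`. Conversely, cutting the cycle just before `z`
breaks no block, so the sets `S` allowing a given `z` are the choices of `m` disjoint blocks of
`t + 1` consecutive points on a line of `n` points. By Pascal's rule, applied according to whether
some block ends at the last point of the line, there are `(n - m * t).choose m` of these.
-/

open Finset

section Interval

variable {t L m : ℕ} {T : Finset ℕ}

/-- `T` is a `t`-sparse subset of the interval `{0, …, L - 1}`: the linear analogue of `TSparse`.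
The `t` successors of every element must also lie in the interval, so that `T` is the set of left
endpoints of disjoint blocks of `t + 1` consecutive points. -/
def SparseBelow (t L : ℕ) (T : Finset ℕ) : Prop :=
  ∀ a ∈ T, a + t < L ∧ ∀ k ∈ Icc 1 t, a + k ∉ T

instance : Decidable (SparseBelow t L T) :=
  inferInstanceAs (Decidable (∀ a ∈ T, a + t < L ∧ ∀ k ∈ Icc 1 t, a + k ∉ T))

lemma SparseBelow.lt (hT : SparseBelow t L T) {a : ℕ} (ha : a ∈ T) : a < L :=
  (Nat.le_add_right a t).trans_lt (hT a ha).1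

lemma sparseBelow_succ_iff_of_notMem (hL : L ∉ T) :
    SparseBelow t (L + t + 1) T ↔ SparseBelow t (L + t) T := by
  refine forall₂_congr fun a ha => and_congr_left fun _ => ?_
  have : a ≠ L := ne_of_mem_of_not_mem ha hL
  omega

lemma sparseBelow_insert_iff (hL : L ∉ T) :
    SparseBelow t (L + t + 1) (insert L T) ↔ SparseBelow t L T := by
  refine ⟨fun h a ha => ?_, fun h a ha => ?_⟩
  · obtain ⟨hlt, hsep⟩ := h a (mem_insert_of_mem ha)
    have hne : a ≠ L := ne_of_mem_of_not_mem ha hL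
    refine ⟨?_, fun k hk hak => hsep k hk (mem_insert_of_mem hak)⟩
    by_contra hge
    refine hsep (L - a) (mem_Icc.2 (by omega)) ?_
    rw [Nat.add_sub_cancel' (by omega)]
    exact mem_insert_self L T
  · rcases mem_insert.1 ha with rfl | haT
    · refine ⟨by omega, fun k hk hak => ?_⟩
      have hk := mem_Icc.1 hk
      rcases mem_insert.1 hak with heq | hmem
      · omega
      · have := h.lt hmem
        omega
    · obtain ⟨hlt, hsep⟩ := h a haT
      refine ⟨by omega, fun k hk hak => ?_⟩
      rcases mem_insert.1 hak with heq | hmem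
      · have := mem_Icc.1 hk
        omega
      · exact hsep k hk hmem

/-- The `m`-element `t`-sparse subsets of the interval `{0, …, L - 1}`. -/
def sparseSubsetsBelow (t L m : ℕ) : Finset (Finset ℕ) :=
  {T ∈ powersetCard m (range L) | SparseBelow t L T}

lemma mem_sparseSubsetsBelow : T ∈ sparseSubsetsBelow t L m ↔ #T = m ∧ SparseBelow t L T := by
  rw [sparseSubsetsBelow, mem_filter, mem_powersetCard, and_assoc, and_iff_right_iff_imp]
  exact fun h a ha => mem_range.2 (h.2.lt ha)

lemma notMem_of_mem_sparseSubsetsBelow (hT : T ∈ sparseSubsetsBelow t L m) : L ∉ T :=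
  fun hL => ((mem_sparseSubsetsBelow.1 hT).2.lt hL).false

lemma filter_notMem_sparseSubsetsBelow (t L m : ℕ) :
    {T ∈ sparseSubsetsBelow t (L + t + 1) m | L ∉ T} = sparseSubsetsBelow t (L + t) m := by
  ext T
  simp only [mem_filter, mem_sparseSubsetsBelow]
  constructor
  · rintro ⟨⟨hcard, hT⟩, hL⟩
    exact ⟨hcard, (sparseBelow_succ_iff_of_notMem hL).1 hT⟩
  · rintro ⟨hcard, hT⟩
    have hL : L ∉ T := fun hL => (hT L hL).1.false
    exact ⟨⟨hcard, (sparseBelow_succ_iff_of_notMem hL).2 hT⟩, hL⟩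

lemma filter_mem_sparseSubsetsBelow (t L m : ℕ) :
    {T ∈ sparseSubsetsBelow t (L + t + 1) (m + 1) | L ∈ T} =
      (sparseSubsetsBelow t L m).image (insert L) := by
  ext T
  simp only [mem_filter, mem_image]
  constructor
  · rintro ⟨hT, hL⟩
    obtain ⟨hcard, hT⟩ := mem_sparseSubsetsBelow.1 hT
    refine ⟨T.erase L, mem_sparseSubsetsBelow.2 ⟨?_, ?_⟩, insert_erase hL⟩
    · rw [card_erase_of_mem hL, hcard, Nat.add_sub_cancel]
    · rwa [← sparseBelow_insert_iff (notMem_erase L T), insert_erase hL]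
  · rintro ⟨U, hU, rfl⟩
    have hL := notMem_of_mem_sparseSubsetsBelow hU
    obtain ⟨hcard, hU⟩ := mem_sparseSubsetsBelow.1 hU
    exact ⟨mem_sparseSubsetsBelow.2
      ⟨by rw [card_insert_of_notMem hL, hcard], (sparseBelow_insert_iff hL).2 hU⟩,
      mem_insert_self L U⟩

lemma card_sparseSubsetsBelow_add_succ (t L m : ℕ) :
    #(sparseSubsetsBelow t (L + t + 1) (m + 1)) =
      #(sparseSubsetsBelow t L m) + #(sparseSubsetsBelow t (L + t) (m + 1)) := by
  have hinj : Set.InjOn (insert L) (sparseSubsetsBelow t L m : Set (Finset ℕ)) := by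
    intro T hT U hU hTU
    rw [← erase_insert (notMem_of_mem_sparseSubsetsBelow hT), hTU,
      erase_insert (notMem_of_mem_sparseSubsetsBelow hU)]
  rw [← card_filter_add_card_filter_not (L ∈ ·), filter_mem_sparseSubsetsBelow,
    filter_notMem_sparseSubsetsBelow, card_image_of_injOn hinj]

lemma sparseSubsetsBelow_zero (t L : ℕ) : sparseSubsetsBelow t L 0 = {∅} := by
  ext T
  rw [mem_sparseSubsetsBelow, card_eq_zero, mem_singleton, and_iff_left_iff_imp]
  rintro rfl
  simp [SparseBelow]

lemma sparseSubsetsBelow_succ_of_le (hL : L ≤ t) (m : ℕ) :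
    sparseSubsetsBelow t L (m + 1) = ∅ := by
  refine eq_empty_of_forall_notMem fun T hT => ?_
  obtain ⟨hcard, hT⟩ := mem_sparseSubsetsBelow.1 hT
  obtain ⟨a, ha⟩ := card_pos.1 (m.succ_pos.trans_eq hcard.symm)
  have := (hT a ha).1
  omega

theorem card_sparseSubsetsBelow (t L m : ℕ) :
    #(sparseSubsetsBelow t L m) = (L - m * t).choose m := by
  induction L using Nat.strong_induction_on generalizing m with
  | _ L ih =>
  rcases m with _ | m
  · rw [sparseSubsetsBelow_zero, card_singleton, Nat.choose_zero_right]
  have hmul : (m + 1) * t = m * t + t := Nat.succ_mul m t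
  rcases le_or_gt L t with hL | hL
  · rw [sparseSubsetsBelow_succ_of_le hL, card_empty, show L - (m + 1) * t = 0 by omega,
      Nat.choose_zero_succ]
  obtain ⟨M, rfl⟩ : ∃ M, L = M + t + 1 := ⟨L - t - 1, by omega⟩
  rw [card_sparseSubsetsBelow_add_succ, ih M (by omega), ih (M + t) (by omega),
    show M + t - (m + 1) * t = M - m * t by omega,
    show M + t + 1 - (m + 1) * t = M + 1 - m * t by omega]
  rcases le_or_gt (m * t) M with hM | hM
  · rw [Nat.sub_add_comm hM, Nat.choose_succ_succ]
  · have hm : 0 < m := Nat.pos_of_mul_pos_right (Nat.zero_lt_of_lt hM)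
    rw [Nat.sub_eq_zero_of_le hM.le, Nat.sub_eq_zero_of_le hM, Nat.choose_zero_succ,
      Nat.choose_eq_zero_of_lt hm]

end Interval

section Cycle

variable {n t : ℕ} {S : Finset (ZMod n)} {z : ZMod n}

/-- The points of `ℤ/nℤ` that are among the `t` successors of some element of `S`. -/
def successors (t : ℕ) (S : Finset (ZMod n)) : Finset (ZMod n) :=
  image₂ (fun c (k : ℕ) => c + (k : ZMod n)) S (Icc 1 t)

lemma notMem_successors :
    z ∉ successors t S ↔ ∀ c ∈ S, ∀ k ∈ Icc 1 t, c + (k : ZMod n) ≠ z := by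
  simp only [successors, mem_image₂, not_exists, not_and]

lemma tSparse_iff : TSparse n t S ↔ ∀ c ∈ S, ∀ k ∈ Icc 1 t, c + (k : ZMod n) ∉ S := by
  simp only [TSparse, mem_Icc, and_imp]

instance : DecidablePred (TSparse n t) := fun _ => decidable_of_iff' _ tSparse_iff

lemma TSparse.add_natCast_ne (hS : TSparse n t S) {c d : ZMod n} (hc : c ∈ S) (hd : d ∈ S)
    {k l : ℕ} (hk : 1 ≤ k) (hkl : k < l) (hl : l ≤ t) : c + (k : ZMod n) ≠ d + (l : ZMod n) := by
  intro h
  have hcd : d + ((l - k : ℕ) : ZMod n) = c := by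
    rw [Nat.cast_sub hkl.le, ← add_sub_assoc, ← h, add_sub_cancel_right]
  exact hS d hd (l - k) (by omega) (by omega) (hcd ▸ hc)

lemma TSparse.card_successors (hS : TSparse n t S) : #(successors t S) = #S * t := by
  rw [successors, card_image₂_iff.2, Nat.card_Icc, Nat.add_sub_cancel]
  rintro ⟨c, k⟩ ⟨hc, hk⟩ ⟨d, l⟩ ⟨hd, hl⟩ h
  simp only [mem_coe, mem_Icc] at hc hd hk hl h
  rcases lt_trichotomy k l with hkl | rfl | hlk
  · exact absurd h (hS.add_natCast_ne hc hd hk.1 hkl hl.2)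
  · rw [add_right_cancel h]
  · exact absurd h.symm (hS.add_natCast_ne hd hc hl.1 hlk hk.2)

/-- The number of steps from `z` forward to `x`, i.e. the position of `x` on the line obtained by
cutting the cycle just before `z`. -/
def stepsFrom (z x : ZMod n) : ℕ := (x - z).val

lemma image_stepsFrom_image_add {T : Finset ℕ} (hT : ∀ a ∈ T, a < n) :
    (T.image fun a : ℕ => z + (a : ZMod n)).image (stepsFrom z) = T := by
  rw [image_image]
  refine (image_congr fun a ha => ?_).trans image_id
  simp only [Function.comp_apply, stepsFrom, add_sub_cancel_left, id_eq]
  exact ZMod.val_cast_of_lt (hT a ha)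

section Cut

variable [NeZero n]

lemma val_add_natCast_of_lt {x : ZMod n} {k : ℕ} (h : x.val + k < n) :
    (x + (k : ZMod n)).val = x.val + k := by
  rw [← ZMod.val_cast_of_lt h, Nat.cast_add, ZMod.natCast_zmod_val]

lemma forall_add_natCast_ne_zero_iff {x : ZMod n} :
    (∀ k ∈ Icc 1 t, x + (k : ZMod n) ≠ 0) ↔ x.val + t < n := by
  have hx := x.val_lt
  constructor
  · intro h
    by_contra hlt
    refine h (n - x.val) (mem_Icc.2 (by omega)) ?_
    rw [Nat.cast_sub hx.le, ZMod.natCast_self, ZMod.natCast_zmod_val, zero_sub, add_neg_cancel]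
  · intro h k hk
    rw [mem_Icc] at hk
    rw [← ZMod.val_ne_zero, val_add_natCast_of_lt (by omega)]
    omega

lemma stepsFrom_injective (z : ZMod n) : Function.Injective (stepsFrom z) :=
  (ZMod.val_injective n).comp sub_left_injective

lemma stepsFrom_add_natCast_of_lt {x : ZMod n} {k : ℕ} (h : stepsFrom z x + k < n) :
    stepsFrom z (x + (k : ZMod n)) = stepsFrom z x + k := by
  rw [stepsFrom, add_sub_right_comm, val_add_natCast_of_lt h, stepsFrom]

lemma forall_add_natCast_ne_iff {x : ZMod n} :
    (∀ k ∈ Icc 1 t, x + (k : ZMod n) ≠ z) ↔ stepsFrom z x + t < n := by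
  rw [stepsFrom, ← forall_add_natCast_ne_zero_iff]
  simp only [sub_add_eq_add_sub, sub_ne_zero]

lemma sparseBelow_image_stepsFrom_iff :
    SparseBelow t n (S.image (stepsFrom z)) ↔ TSparse n t S ∧ z ∉ successors t S := by
  rw [SparseBelow, forall_mem_image, tSparse_iff, notMem_successors, ← forall₂_and]
  refine forall₂_congr fun x _ => ?_
  rw [forall_add_natCast_ne_iff, and_comm]
  refine and_congr_left fun hx => forall₂_congr fun k hk => ?_
  have hkt := (mem_Icc.1 hk).2
  rw [← stepsFrom_add_natCast_of_lt (by omega), (stepsFrom_injective z).mem_finset_image]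

lemma card_tSparse_notMem_successors (t m : ℕ) (z : ZMod n) :
    #{S : Finset (ZMod n) | (#S = m ∧ TSparse n t S) ∧ z ∉ successors t S} =
      #(sparseSubsetsBelow t n m) := by
  have hmem (S : Finset (ZMod n)) : S.image (stepsFrom z) ∈ sparseSubsetsBelow t n m ↔
      (#S = m ∧ TSparse n t S) ∧ z ∉ successors t S := by
    rw [mem_sparseSubsetsBelow, sparseBelow_image_stepsFrom_iff,
      card_image_of_injective S (stepsFrom_injective z), and_assoc]
  refine card_nbij (image (stepsFrom z)) (fun S hS => (hmem S).2 ((mem_filter_univ S).1 hS))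
    (image_injective (stepsFrom_injective z)).injOn fun T hT => ?_
  have himage := image_stepsFrom_image_add (z := z) fun a => (mem_sparseSubsetsBelow.1 hT).2.lt
  refine ⟨_, mem_coe.2 ((mem_filter_univ _).2 ((hmem _).1 ?_)), himage⟩
  rwa [himage]

end Cut

end Cycle

/-- The case `t = 1` is Kaplansky's lemma from the solution of the ménage problem. -/
theorem stmt_2_general (n t m : ℕ) (hmt : m * t < n) :
    (n - m * t) * {S : Finset (ZMod n) | S.card = m ∧ TSparse n t S}.ncard
      = n * (n - m * t).choose m := by
  have : NeZero n := ⟨Nat.ne_zero_of_lt hmt⟩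
  let sparse : Finset (Finset (ZMod n)) := {S | #S = m ∧ TSparse n t S}
  have hset : {S : Finset (ZMod n) | S.card = m ∧ TSparse n t S} = sparse := by
    simp [sparse]
  have habove : ∀ S ∈ sparse, #{z | z ∉ successors t S} = n - m * t := by
    intro S hS
    obtain ⟨hcard, hsparse⟩ := (mem_filter_univ S).1 hS
    rw [filter_notMem_eq_sdiff, ← compl_eq_univ_sdiff, card_compl, ZMod.card,
      hsparse.card_successors, hcard]
  have hbelow : ∀ z ∈ univ, #{S ∈ sparse | z ∉ successors t S} = (n - m * t).choose m := by
    intro z _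
    rw [filter_filter, card_tSparse_notMem_successors, card_sparseSubsetsBelow]
  rw [hset, Set.ncard_coe_finset, mul_comm,
    card_mul_eq_card_mul (fun S z => z ∉ successors t S) habove hbelow, card_univ, ZMod.card]

/-- Proposition 4.6: if `N` is the number of `m`-element `t`-sparse subsets of `ℤ/nℤ`,
then `(n - m·t)·N = n·C(n - m·t, m)`, i.e. `N = (n/(n - m·t))·C(n - m·t, m)`. -/
theorem stmt_2 (n t m : ℕ) (ht : 2 ≤ t) (hm : 1 ≤ m) (hmt : m * t < n) :
    (n - m * t) *
        {S : Finset (ZMod n) | S.card = m ∧ TSparse n t S}.ncard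
      = n * (n - m * t).choose m :=
  stmt_2_general n t m hmt
end

section
/- Fix integers n and t with 2 ≤ t < n. Let C ⊆ ℤ/nℤ be a t-sparse set, let c ∈ C, let V = ⋃_{c' ∈ C} F(c'), and let W = V ∪ {c + t}. Then the cardinality of Ind(W) equals |C| + t if c + t + 1 ∈ C, and equals |C| + 1 if c + t + 1 ∉ C. -/
/-- The facet `F(i) = {i, i+1, …, i+t-1}` of the path complex `Δ_t(C_n)`
with standard labeling, vertices identified with `ℤ/nℤ`. -/
def facet (n t : ℕ) (i : ZMod n) : Finset (ZMod n) :=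
  (Finset.range t).image (fun r : ℕ => i + (r : ZMod n))

/-- `Ind(W) = {j : F(j) ⊆ W}`, the index set of the induced subcollection of
`Δ_t(C_n)` on the vertex set `W`. -/
def indSet (n t : ℕ) (W : Finset (ZMod n)) : Set (ZMod n) :=
  {j | facet n t j ⊆ W}

/-!
Write `V` for the union of the runs of `C` and `W = V ∪ {c + t}`. Sparsity says that the vertex
`c + t` just after the run of `c` lies outside `V`; applied to all runs this forces `Ind(V) = C`.
So a facet of `W` not indexed by `C` contains `c + t`, that is, it starts in
`F(c + 1) = {c + 1, …, c + t}`. The facet starting at `c + 1` always lies in `F(c) ∪ {c + t} ⊆ W`.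
All later ones contain `c + t + 1`, which lies in `W` only if a new run starts there; in that case
`F(c)`, `c + t` and `F(c + t + 1)` fill an interval containing all these facets.
-/

section Facet

variable {n t r : ℕ} {i j x : ZMod n}

theorem mem_facet : x ∈ facet n t i ↔ ∃ r < t, i + (r : ZMod n) = x := by
  simp only [facet, Finset.mem_image, Finset.mem_range]

theorem add_natCast_mem_facet (hr : r < t) : i + (r : ZMod n) ∈ facet n t i :=
  mem_facet.2 ⟨r, hr, rfl⟩

theorem self_mem_facet (ht : 0 < t) : i ∈ facet n t i :=
  mem_facet.2 ⟨0, ht, by rw [Nat.cast_zero, add_zero]⟩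

theorem add_mem_facet_add_natCast (hr : 0 < r) (hrt : r ≤ t) :
    i + (t : ZMod n) ∈ facet n t (i + (r : ZMod n)) :=
  mem_facet.2 ⟨t - r, by omega, by rw [Nat.cast_sub hrt]; ring⟩

theorem card_facet (htn : t ≤ n) (i : ZMod n) : (facet n t i).card = t := by
  rw [facet, Finset.card_image_of_injOn, Finset.card_range]
  intro a ha b hb hab
  rw [Finset.mem_coe, Finset.mem_range] at ha hb
  have hmod : a % n = b % n := (ZMod.natCast_eq_natCast_iff' a b n).1 (add_left_cancel hab)
  rwa [Nat.mod_eq_of_lt (ha.trans_le htn), Nat.mod_eq_of_lt (hb.trans_le htn)] at hmod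

theorem mem_facet_add_one_of_add_mem_facet (h : i + (t : ZMod n) ∈ facet n t j) :
    j ∈ facet n t (i + 1) := by
  obtain ⟨r, hr, hjr⟩ := mem_facet.1 h
  refine mem_facet.2 ⟨t - (r + 1), by omega, ?_⟩
  rw [Nat.cast_sub hr]
  push_cast
  linear_combination -hjr

theorem facet_add_one_subset (n t : ℕ) (i : ZMod n) :
    facet n t (i + 1) ⊆ facet n t i ∪ {i + (t : ZMod n)} := by
  intro x hx
  obtain ⟨r, hr, rfl⟩ := mem_facet.1 hx
  have hshift : i + 1 + (r : ZMod n) = i + ((r + 1 : ℕ) : ZMod n) := by push_cast; ring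
  rw [hshift, Finset.mem_union, Finset.mem_singleton]
  obtain hlt | heq := Nat.lt_or_eq_of_le (Nat.succ_le_of_lt hr)
  · exact Or.inl (add_natCast_mem_facet hlt)
  · exact Or.inr (by rw [← heq])

theorem facet_subset_of_mem_facet_add_one (hj : j ∈ facet n t (i + 1)) :
    facet n t j ⊆ facet n t i ∪ {i + (t : ZMod n)} ∪ facet n t (i + (t : ZMod n) + 1) := by
  intro x hx
  obtain ⟨s, hs, rfl⟩ := mem_facet.1 hj
  obtain ⟨r, hr, rfl⟩ := mem_facet.1 hx
  rw [Finset.mem_union]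
  obtain hlt | hge := lt_or_ge (s + r) t
  · refine Or.inl (facet_add_one_subset n t i (mem_facet.2 ⟨s + r, hlt, ?_⟩))
    push_cast
    ring
  · refine Or.inr (mem_facet.2 ⟨s + r - t, by omega, ?_⟩)
    rw [Nat.cast_sub hge]
    push_cast
    ring

end Facet

section Runs

variable {n t : ℕ} {C W : Finset (ZMod n)} {c j x : ZMod n}

theorem mem_biUnion_facet :
    x ∈ C.biUnion (facet n t) ↔ ∃ c ∈ C, ∃ r < t, c + (r : ZMod n) = x := by
  simp only [Finset.mem_biUnion, mem_facet]

theorem add_one_mem_of_notMem_biUnion_facet (hx : x ∉ C.biUnion (facet n t))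
    (hx1 : x + 1 ∈ C.biUnion (facet n t)) : x + 1 ∈ C := by
  obtain ⟨d, hd, r, hr, hdr⟩ := mem_biUnion_facet.1 hx1
  cases r with
  | zero => rwa [← hdr, Nat.cast_zero, add_zero]
  | succ r =>
    refine absurd (mem_biUnion_facet.2 ⟨d, hd, r, by omega, ?_⟩) hx
    push_cast at hdr
    linear_combination hdr

theorem coe_subset_indSet_iff : ↑C ⊆ indSet n t W ↔ C.biUnion (facet n t) ⊆ W :=
  Finset.biUnion_subset.symm

theorem mem_indSet_or_mem_facet_of_mem_indSet_union_singleton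
    (hj : j ∈ indSet n t (W ∪ {x})) : j ∈ indSet n t W ∨ x ∈ facet n t j :=
  or_iff_not_imp_right.2 fun hx =>
    (Finset.subset_insert_iff_of_notMem hx).1 (hj.trans_eq (Finset.union_singleton ..))

theorem coe_subset_indSet_biUnion_facet_union (C W : Finset (ZMod n)) :
    ↑C ⊆ indSet n t (C.biUnion (facet n t) ∪ W) :=
  coe_subset_indSet_iff.2 Finset.subset_union_left

namespace TSparse

theorem add_notMem_biUnion_facet (hC : TSparse n t C) (hc : c ∈ C) :
    c + (t : ZMod n) ∉ C.biUnion (facet n t) := by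
  rw [mem_biUnion_facet]
  rintro ⟨d, hd, r, hr, hdr⟩
  have hcd : c + ((t - r : ℕ) : ZMod n) = d := by
    rw [Nat.cast_sub hr.le]
    linear_combination -hdr
  exact hC c hc (t - r) (by omega) (Nat.sub_le t r) (hcd ▸ hd)

theorem disjoint_facet_add_one (hC : TSparse n t C) (hc : c ∈ C) :
    Disjoint C (facet n t (c + 1)) := by
  rw [Finset.disjoint_right]
  intro x hx
  obtain ⟨r, hr, rfl⟩ := mem_facet.1 hx
  have hnot := hC c hc (r + 1) (by omega) hr
  rwa [Nat.cast_add_one, add_comm (r : ZMod n), ← add_assoc] at hnot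

theorem indSet_biUnion_facet (hC : TSparse n t C) (ht : 0 < t) :
    indSet n t (C.biUnion (facet n t)) = C := by
  refine Set.Subset.antisymm (fun j hj => ?_) (coe_subset_indSet_iff.2 subset_rfl)
  obtain ⟨d, hd, r, hr, rfl⟩ := mem_biUnion_facet.1 (hj (self_mem_facet ht))
  obtain rfl | hpos := Nat.eq_zero_or_pos r
  · rwa [Nat.cast_zero, add_zero]
  · exact absurd (hj (add_mem_facet_add_natCast hpos hr.le)) (hC.add_notMem_biUnion_facet hd)

theorem indSet_union_singleton_subset (hC : TSparse n t C) (ht : 0 < t) :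
    indSet n t (C.biUnion (facet n t) ∪ {c + (t : ZMod n)}) ⊆ ↑(C ∪ facet n t (c + 1)) := by
  intro j hj
  rw [Finset.coe_union, ← hC.indSet_biUnion_facet ht]
  exact (mem_indSet_or_mem_facet_of_mem_indSet_union_singleton hj).imp_right
    mem_facet_add_one_of_add_mem_facet

theorem add_add_one_notMem_union (hC : TSparse n t C) (ht : 0 < t) (hc : c ∈ C)
    (hnext : c + (t : ZMod n) + 1 ∉ C) :
    c + (t : ZMod n) + 1 ∉ C.biUnion (facet n t) ∪ {c + (t : ZMod n)} := by
  rw [Finset.mem_union, Finset.mem_singleton, not_or]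
  refine ⟨fun h => hnext (add_one_mem_of_notMem_biUnion_facet
    (hC.add_notMem_biUnion_facet hc) h), fun h => hC c hc 1 le_rfl ht ?_⟩
  rwa [Nat.cast_one, add_eq_left.1 h, add_zero]

theorem indSet_union_singleton_of_add_add_one_mem (hC : TSparse n t C) (ht : 0 < t) (hc : c ∈ C)
    (hnext : c + (t : ZMod n) + 1 ∈ C) :
    indSet n t (C.biUnion (facet n t) ∪ {c + (t : ZMod n)}) = ↑(C ∪ facet n t (c + 1)) := by
  refine (hC.indSet_union_singleton_subset ht).antisymm ?_
  rw [Finset.coe_union]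
  refine Set.union_subset (coe_subset_indSet_biUnion_facet_union C _) fun j hj => ?_
  have hrun {d : ZMod n} (hd : d ∈ C) :
      facet n t d ⊆ C.biUnion (facet n t) ∪ {c + (t : ZMod n)} :=
    coe_subset_indSet_biUnion_facet_union C _ hd
  exact (facet_subset_of_mem_facet_add_one hj).trans <|
    Finset.union_subset (Finset.union_subset (hrun hc) Finset.subset_union_right) (hrun hnext)

theorem indSet_union_singleton_of_add_add_one_notMem (hC : TSparse n t C) (ht : 0 < t)
    (hc : c ∈ C) (hnext : c + (t : ZMod n) + 1 ∉ C) :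
    indSet n t (C.biUnion (facet n t) ∪ {c + (t : ZMod n)}) = ↑(insert (c + 1) C) := by
  rw [Finset.coe_insert]
  refine Set.Subset.antisymm (fun j hj => ?_)
    (Set.insert_subset ?_ (coe_subset_indSet_biUnion_facet_union C _))
  · obtain hjC | hjF := Finset.mem_union.1 (hC.indSet_union_singleton_subset ht hj)
    · exact Or.inr hjC
    obtain ⟨s, hs, rfl⟩ := mem_facet.1 hjF
    obtain rfl | hpos := Nat.eq_zero_or_pos s
    · exact Or.inl (by rw [Nat.cast_zero, add_zero])
    · have hend : c + 1 + (t : ZMod n) ∈ facet n t (c + 1 + (s : ZMod n)) :=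
        add_mem_facet_add_natCast hpos hs.le
      rw [add_right_comm c 1 (t : ZMod n)] at hend
      exact absurd (hj hend) (hC.add_add_one_notMem_union ht hc hnext)
  · exact (facet_add_one_subset n t c).trans
      (Finset.union_subset_union_left (Finset.subset_biUnion_of_mem (facet n t) hc))

end TSparse

end Runs

/-- Lemma 4.5: let `C` be `t`-sparse, `c ∈ C`, `V = ⋃_{c' ∈ C} F(c')` and
`W = V ∪ {c + t}`.  Then `|Ind(W)| = |C| + t` if `c + t + 1 ∈ C`, and
`|Ind(W)| = |C| + 1` otherwise. -/
theorem stmt_5 (n t : ℕ) (ht : 2 ≤ t) (htn : t < n)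
    (C : Finset (ZMod n)) (hC : TSparse n t C) (c : ZMod n) (hc : c ∈ C) :
    (indSet n t (C.biUnion (facet n t) ∪ {c + (t : ZMod n)})).ncard
      = if c + (t : ZMod n) + 1 ∈ C then C.card + t else C.card + 1 := by
  have ht0 : 0 < t := by omega
  have hdisj : Disjoint C (facet n t (c + 1)) := hC.disjoint_facet_add_one hc
  split_ifs with hnext
  · rw [hC.indSet_union_singleton_of_add_add_one_mem ht0 hc hnext, Set.ncard_coe_finset,
      Finset.card_union_of_disjoint hdisj, card_facet htn.le]
  · have hnew : c + 1 ∉ C := Finset.disjoint_right.1 hdisj (self_mem_facet ht0)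
    rw [hC.indSet_union_singleton_of_add_add_one_notMem ht0 hc hnext, Set.ncard_coe_finset,
      Finset.card_insert_of_notMem hnew]
end

section
/- Fix integers n, t, i, j with t ≥ 2, i ≥ 1, j ≥ 0 and t·i + j < n. Let 𝒲 be the collection of all subsets W ⊆ {1, 2, …, n} for which there exist a set C ⊆ {1, …, n − t + 1} with |C| = i whose distinct elements pairwise differ by more than t, and a set A ⊆ {c + t : c ∈ C and c + t ≤ n} with |A| = j, such that W = (⋃_{c ∈ C} {c, c+1, …, c+t−1}) ∪ A. Then |𝒲| = C(i, j)·C(n − i·t, i) + C(i−1, j)·C(n − i·t, i−1). -/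
/-!
If `C` is sparse and `A` consists of successors of blocks, then `W = (⋃_{c ∈ C} G(c)) ∪ A`
determines `C` greedily from left to right: `x` starts a block exactly when `x ∈ W` and no
block starts in `[x - t, x)`. Then `A` is what the blocks leave over. So the task is to count
pairs `(C, A)`, that is to sum `C(s, j)` over all `C`, where `s` is the number of `c ∈ C` with
`c + t ≤ n`. Only the last facet `G(n - t + 1)` has no successor vertex, so `s` is `i` or `i - 1`
according to whether `n - t + 1 ∉ C` or `n - t + 1 ∈ C`; the number of sparse `C` of either kind
is a binomial coefficient by Pascal's rule.
-/

section

open Finset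

/-- A set of naturals is `t`-sparse if its distinct elements pairwise differ by more than `t`.
For starting points of facets of length `t` this says that the facets are disjoint and
non-adjacent, i.e. that they form an induced subcollection of runs of length one. -/
def IsSparse (t : ℕ) (C : Finset ℕ) : Prop :=
  ∀ a ∈ C, ∀ b ∈ C, a < b → t + a < b

instance (t : ℕ) : DecidablePred (IsSparse t) := fun C =>
  inferInstanceAs (Decidable (∀ a ∈ C, ∀ b ∈ C, a < b → t + a < b))

/-- The `t`-sparse subsets of `{1, …, m}` with `i` elements. -/
def sparseSubsets (t m i : ℕ) : Finset (Finset ℕ) :=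
  {C ∈ (Icc 1 m).powersetCard i | IsSparse t C}

/-- The union of the facets `G(c) = {c, …, c + t - 1}` with `c ∈ C`. -/
def facetUnion (t : ℕ) (C : Finset ℕ) : Finset ℕ :=
  C.biUnion fun c => Ico c (c + t)

/-- The vertices of `L_n` that immediately follow a facet `G(c)` with `c ∈ C`. -/
def nextVertices (n t : ℕ) (C : Finset ℕ) : Finset ℕ :=
  {c ∈ C | c + t ≤ n}.image fun c => c + t

/-- The vertex sets of the `(i + j, t * i + j)`-eligible subcollections of `Δ_t(L_n)`: `i` pairwise
non-adjacent facets together with `j` of the vertices that immediately follow them. -/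
def eligibleVertexSets (n t i j : ℕ) : Finset (Finset ℕ) :=
  ((sparseSubsets t (n - t + 1) i).sigma fun C => (nextVertices n t C).powersetCard j).image
    fun p => facetUnion t p.1 ∪ p.2

variable {n t m i j x : ℕ} {A B C D : Finset ℕ}

theorem isSparse_insert_of_forall_lt (h : ∀ a ∈ C, a < x) :
    IsSparse t (insert x C) ↔ IsSparse t C ∧ ∀ a ∈ C, t + a < x := by
  simp only [IsSparse, forall_mem_insert, lt_irrefl, false_imp_iff, true_and]
  grind

theorem mem_sparseSubsets :
    C ∈ sparseSubsets t m i ↔ (C ⊆ Icc 1 m ∧ #C = i) ∧ IsSparse t C := by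
  rw [sparseSubsets, mem_filter, mem_powersetCard]

theorem subset_Icc_of_mem_sparseSubsets (hC : C ∈ sparseSubsets t m i) : C ⊆ Icc 1 m :=
  (mem_sparseSubsets.1 hC).1.1

theorem card_of_mem_sparseSubsets (hC : C ∈ sparseSubsets t m i) : #C = i :=
  (mem_sparseSubsets.1 hC).1.2

theorem notMem_of_mem_sparseSubsets (hC : C ∈ sparseSubsets t m i) (hx : m < x) : x ∉ C :=
  fun h => hx.not_ge (mem_Icc.1 (subset_Icc_of_mem_sparseSubsets hC h)).2

theorem sparseSubsets_zero_right (t m : ℕ) : sparseSubsets t m 0 = {∅} := by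
  simp [sparseSubsets, IsSparse, filter_singleton]

theorem sparseSubsets_zero_succ (t i : ℕ) : sparseSubsets t 0 (i + 1) = ∅ := by
  simp [sparseSubsets]

theorem filter_isSparse_insert_succ (t m i : ℕ) :
    {C ∈ (Icc 1 m).powersetCard i | IsSparse t (insert (m + 1) C)} =
      sparseSubsets t (m - t) i := by
  ext C
  have hIcc : C ⊆ Icc 1 m ∧ (∀ a ∈ C, t + a < m + 1) ↔ C ⊆ Icc 1 (m - t) := by
    simp only [subset_iff, mem_Icc, ← forall₂_and]
    exact forall₂_congr fun a _ => by omega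
  rw [mem_filter, mem_powersetCard, mem_sparseSubsets, ← hIcc]
  constructor
  · rintro ⟨⟨hC, hcard⟩, hsparse⟩
    have hlt : ∀ a ∈ C, a < m + 1 := fun a ha => Nat.lt_succ_of_le (mem_Icc.1 (hC ha)).2
    obtain ⟨hsparse, hgap⟩ := (isSparse_insert_of_forall_lt hlt).1 hsparse
    exact ⟨⟨⟨hC, hgap⟩, hcard⟩, hsparse⟩
  · rintro ⟨⟨⟨hC, hgap⟩, hcard⟩, hsparse⟩
    have hlt : ∀ a ∈ C, a < m + 1 := fun a ha => Nat.lt_succ_of_le (mem_Icc.1 (hC ha)).2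
    exact ⟨⟨hC, hcard⟩, (isSparse_insert_of_forall_lt hlt).2 ⟨hsparse, hgap⟩⟩

theorem sparseSubsets_succ_succ (t m i : ℕ) :
    sparseSubsets t (m + 1) (i + 1) =
      sparseSubsets t m (i + 1) ∪ (sparseSubsets t (m - t) i).image (insert (m + 1)) := by
  rw [sparseSubsets, ← insert_Icc_right_eq_Icc_add_one (by omega),
    powersetCard_succ_insert (by simp), filter_union, filter_image,
    filter_isSparse_insert_succ]
  rfl

theorem sum_sparseSubsets_succ_succ {M : Type*} [AddCommMonoid M] (t m i : ℕ)
    (f : Finset ℕ → M) :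
    ∑ C ∈ sparseSubsets t (m + 1) (i + 1), f C =
      ∑ C ∈ sparseSubsets t m (i + 1), f C +
        ∑ C ∈ sparseSubsets t (m - t) i, f (insert (m + 1) C) := by
  have hdisj : Disjoint (sparseSubsets t m (i + 1))
      ((sparseSubsets t (m - t) i).image (insert (m + 1))) := by
    refine disjoint_right.2 (forall_mem_image.2 fun C _ hC => ?_)
    exact notMem_of_mem_sparseSubsets hC m.lt_succ_self (mem_insert_self _ _)
  have hinj : Set.InjOn (insert (m + 1)) (sparseSubsets t (m - t) i : Set (Finset ℕ)) := by
    intro C hC D hD h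
    have hC' : m + 1 ∉ C := notMem_of_mem_sparseSubsets hC (by omega)
    have hD' : m + 1 ∉ D := notMem_of_mem_sparseSubsets hD (by omega)
    rw [← erase_insert hC', h, erase_insert hD']
  rw [sparseSubsets_succ_succ, sum_union hdisj, sum_image hinj]

theorem card_sparseSubsets_succ_succ (t m i : ℕ) :
    #(sparseSubsets t (m + 1) (i + 1)) =
      #(sparseSubsets t m (i + 1)) + #(sparseSubsets t (m - t) i) := by
  simpa only [card_eq_sum_ones] using sum_sparseSubsets_succ_succ t m i fun _ => 1

-- The recursion replaces `m` by `m - t`; in this form the formula is closed under that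
-- substitution, truncated subtraction included.
theorem card_sparseSubsets_sub (t m i : ℕ) :
    #(sparseSubsets t (m - t) i) = (m - i * t).choose i := by
  induction m using Nat.strong_induction_on generalizing i with
  | _ m ih =>
    obtain _ | i := i
    · simp [sparseSubsets_zero_right]
    have hmul : (i + 1) * t = i * t + t := Nat.succ_mul i t
    obtain hmt | hmt := le_or_gt m t
    · rw [Nat.sub_eq_zero_of_le hmt, sparseSubsets_zero_succ,
        Nat.sub_eq_zero_of_le (by omega), Nat.choose_zero_succ, card_empty]
    obtain ⟨m, rfl⟩ : ∃ k, m = k + 1 := ⟨m - 1, by omega⟩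
    rw [Nat.sub_add_comm (by omega), card_sparseSubsets_succ_succ, ih m (by omega),
      ih (m - t) (by omega), show m - t - i * t = m - (i + 1) * t by omega]
    obtain hm | hm := le_or_gt ((i + 1) * t) m
    · rw [Nat.sub_add_comm hm, Nat.choose_succ_succ', add_comm]
    · have hi : i ≠ 0 := by rintro rfl; omega
      rw [Nat.sub_eq_zero_of_le hm.le, Nat.sub_eq_zero_of_le hm, Nat.choose_zero_succ,
        Nat.choose_eq_zero_of_lt (by omega)]

theorem mem_facetUnion : x ∈ facetUnion t C ↔ ∃ c ∈ C, c ≤ x ∧ x < c + t := by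
  simp only [facetUnion, mem_biUnion, mem_Ico]

theorem facetUnion_subset_Icc (htn : t ≤ n) (hC : C ⊆ Icc 1 (n - t + 1)) :
    facetUnion t C ⊆ Icc 1 n := by
  intro x hx
  obtain ⟨c, hc, hcx, hxc⟩ := mem_facetUnion.1 hx
  have := mem_Icc.1 (hC hc)
  exact mem_Icc.2 (by omega)

theorem nextVertices_subset_image (n t : ℕ) (C : Finset ℕ) :
    nextVertices n t C ⊆ C.image (· + t) :=
  image_subset_image (filter_subset _ _)

theorem nextVertices_subset_Icc (hC : C ⊆ Icc 1 m) : nextVertices n t C ⊆ Icc 1 n := by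
  refine image_subset_iff.2 fun c hc => ?_
  obtain ⟨hcC, hcn⟩ := mem_filter.1 hc
  exact mem_Icc.2 ⟨le_add_right (mem_Icc.1 (hC hcC)).1, hcn⟩

theorem card_nextVertices (h : ∀ c ∈ C, c + t ≤ n) : #(nextVertices n t C) = #C := by
  rw [nextVertices, filter_true_of_mem h, card_image_of_injective _ (add_left_injective t)]

theorem nextVertices_insert_of_lt (hx : n < x + t) :
    nextVertices n t (insert x C) = nextVertices n t C := by
  rw [nextVertices, filter_insert, if_neg hx.not_ge, nextVertices]

theorem IsSparse.disjoint_facetUnion_image (hC : IsSparse t C) :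
    Disjoint (facetUnion t C) (C.image (· + t)) := by
  refine disjoint_right.2 (forall_mem_image.2 fun d hd hx => ?_)
  obtain ⟨c, hc, hcd, hdc⟩ := mem_facetUnion.1 hx
  have := hC d hd c hc
  omega

theorem IsSparse.mem_iff_mem_facetUnion_union (ht : 0 < t) (hC : IsSparse t C)
    (hA : A ⊆ C.image (· + t)) :
    x ∈ C ↔ x ∈ facetUnion t C ∪ A ∧ ∀ c < x, c ∈ C → t + c < x := by
  constructor
  · intro hx
    have hxU : x ∈ facetUnion t C := mem_facetUnion.2 ⟨x, hx, le_rfl, by omega⟩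
    exact ⟨mem_union_left _ hxU, fun c hcx hc => hC c hc x hx hcx⟩
  · rintro ⟨hx, hgap⟩
    obtain ⟨c, hc, hcx, hxc⟩ : ∃ c ∈ C, c ≤ x ∧ x ≤ t + c := by
      obtain hx | hx := mem_union.1 hx
      · obtain ⟨c, hc, hcx, hxc⟩ := mem_facetUnion.1 hx
        exact ⟨c, hc, hcx, by omega⟩
      · obtain ⟨c, hc, rfl⟩ := mem_image.1 (hA hx)
        exact ⟨c, hc, by omega, by omega⟩
    obtain rfl | hlt := hcx.eq_or_lt
    · exact hc
    · exact absurd (hgap c hlt hc) hxc.not_gt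

theorem IsSparse.eq_of_facetUnion_union_eq (ht : 0 < t) (hC : IsSparse t C)
    (hD : IsSparse t D) (hA : A ⊆ C.image (· + t)) (hB : B ⊆ D.image (· + t))
    (h : facetUnion t C ∪ A = facetUnion t D ∪ B) : C = D := by
  ext x
  induction x using Nat.strong_induction_on with
  | _ x ih =>
    rw [hC.mem_iff_mem_facetUnion_union ht hA, hD.mem_iff_mem_facetUnion_union ht hB, h]
    exact and_congr_right' (forall₂_congr fun c hc => by rw [ih c hc])

theorem IsSparse.facetUnion_union_inj (ht : 0 < t) (hC : IsSparse t C) (hD : IsSparse t D)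
    (hA : A ⊆ C.image (· + t)) (hB : B ⊆ D.image (· + t)) :
    facetUnion t C ∪ A = facetUnion t D ∪ B ↔ C = D ∧ A = B := by
  refine ⟨fun h => ?_, by rintro ⟨rfl, rfl⟩; rfl⟩
  obtain rfl : C = D := hC.eq_of_facetUnion_union_eq ht hD hA hB h
  have hdisjA : Disjoint (facetUnion t C) A := hC.disjoint_facetUnion_image.mono_right hA
  have hdisjB : Disjoint (facetUnion t C) B := hC.disjoint_facetUnion_image.mono_right hB
  exact ⟨rfl, by rw [← union_sdiff_cancel_left hdisjA, h, union_sdiff_cancel_left hdisjB]⟩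

theorem mem_eligibleVertexSets {W : Finset ℕ} :
    W ∈ eligibleVertexSets n t i j ↔ ∃ C A, C ⊆ Icc 1 (n - t + 1) ∧ IsSparse t C ∧ #C = i ∧
      A ⊆ nextVertices n t C ∧ #A = j ∧ W = facetUnion t C ∪ A := by
  simp only [eligibleVertexSets, mem_image, mem_sigma, mem_powersetCard, mem_sparseSubsets,
    Sigma.exists]
  grind

theorem subset_Icc_of_mem_eligibleVertexSets {W : Finset ℕ} (htn : t ≤ n)
    (hW : W ∈ eligibleVertexSets n t i j) : W ⊆ Icc 1 n := by
  obtain ⟨C, A, hC, -, -, hA, -, rfl⟩ := mem_eligibleVertexSets.1 hW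
  exact union_subset (facetUnion_subset_Icc htn hC) (hA.trans (nextVertices_subset_Icc hC))

theorem card_eligibleVertexSets_eq_sum (ht : 0 < t) :
    #(eligibleVertexSets n t i j) =
      ∑ C ∈ sparseSubsets t (n - t + 1) i, (#(nextVertices n t C)).choose j := by
  rw [eligibleVertexSets, card_image_of_injOn, card_sigma]
  · simp only [card_powersetCard]
  rintro ⟨C, A⟩ hCA ⟨D, B⟩ hDB h
  simp only [mem_coe, mem_sigma, mem_powersetCard, mem_sparseSubsets] at hCA hDB
  have himage := nextVertices_subset_image n t
  obtain ⟨rfl, rfl⟩ := (hCA.1.2.facetUnion_union_inj ht hDB.1.2 (hCA.2.1.trans (himage C))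
    (hDB.2.1.trans (himage D))).1 h
  rfl

theorem card_eligibleVertexSets_succ (ht : 0 < t) (htn : t ≤ n) (i j : ℕ) :
    #(eligibleVertexSets n t (i + 1) j) =
      (i + 1).choose j * (n - (i + 1) * t).choose (i + 1) +
        i.choose j * (n - (i + 1) * t).choose i := by
  have hcard {m k : ℕ} {C : Finset ℕ} (hm : m ≤ n - t) (hC : C ∈ sparseSubsets t m k) :
      #(nextVertices n t C) = k := by
    rw [card_nextVertices, card_of_mem_sparseSubsets hC]
    intro c hc
    have := mem_Icc.1 (subset_Icc_of_mem_sparseSubsets hC hc)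
    omega
  have hlast (C : Finset ℕ) :
      nextVertices n t (insert (n - t + 1) C) = nextVertices n t C :=
    nextVertices_insert_of_lt (by omega)
  have hsub : n - t - i * t = n - (i + 1) * t := by rw [Nat.sub_sub, Nat.succ_mul, add_comm]
  rw [card_eligibleVertexSets_eq_sum ht, sum_sparseSubsets_succ_succ]
  congr 1
  · rw [sum_congr rfl fun C hC => by rw [hcard le_rfl hC], sum_const, smul_eq_mul,
      card_sparseSubsets_sub, mul_comm]
  · rw [sum_congr rfl fun C hC => by rw [hlast, hcard (Nat.sub_le _ _) hC], sum_const,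
      smul_eq_mul, card_sparseSubsets_sub, hsub, mul_comm]

end

theorem stmt_10_general (n t i j : ℕ) (ht : 0 < t) (htn : t ≤ n) (hi : 1 ≤ i) :
    {W : Finset ℕ | W ⊆ Finset.Icc 1 n ∧ ∃ C A : Finset ℕ,
        C ⊆ Finset.Icc 1 (n - t + 1) ∧
        (∀ a ∈ C, ∀ b ∈ C, a < b → t + a < b) ∧
        C.card = i ∧
        A ⊆ (C.filter (fun c => c + t ≤ n)).image (fun c => c + t) ∧
        A.card = j ∧
        W = C.biUnion (fun c => (Finset.range t).image (fun r => c + r)) ∪ A}.ncard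
      = i.choose j * ((n - i * t).choose i)
        + (i - 1).choose j * ((n - i * t).choose (i - 1)) := by
  obtain ⟨k, rfl⟩ : ∃ k, i = k + 1 := ⟨i - 1, by omega⟩
  rw [Nat.add_sub_cancel, ← card_eligibleVertexSets_succ ht htn, ← Set.ncard_coe_finset]
  congr 1
  ext W
  simp only [Finset.range_eq_Ico, Finset.image_add_left_Ico, add_zero]
  exact (and_congr_right' mem_eligibleVertexSets.symm).trans
    (and_iff_right_of_imp (subset_Icc_of_mem_eligibleVertexSets htn))

/-- Theorem 4.10(ii) in combinatorial form, for the line graph `L_n` on vertices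
`{1, …, n}` with facets `G(c) = {c, c+1, …, c+t-1}`, `1 ≤ c ≤ n - t + 1`:
the number of vertex sets `W = (⋃_{c ∈ C} G(c)) ∪ A`, where `C ⊆ {1, …, n-t+1}`
has `|C| = i` with distinct elements pairwise differing by more than `t`, and
`A ⊆ {c + t : c ∈ C, c + t ≤ n}` has `|A| = j`, equals
`C(i, j)·C(n - i·t, i) + C(i-1, j)·C(n - i·t, i-1)`. -/
theorem stmt_10 (n t i j : ℕ) (ht : 2 ≤ t) (hi : 1 ≤ i) (hij : t * i + j < n) :
    {W : Finset ℕ | W ⊆ Finset.Icc 1 n ∧ ∃ C A : Finset ℕ,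
        C ⊆ Finset.Icc 1 (n - t + 1) ∧
        (∀ a ∈ C, ∀ b ∈ C, a < b → t + a < b) ∧
        C.card = i ∧
        A ⊆ (C.filter (fun c => c + t ≤ n)).image (fun c => c + t) ∧
        A.card = j ∧
        W = C.biUnion (fun c => (Finset.range t).image (fun r => c + r)) ∪ A}.ncard
      = i.choose j * ((n - i * t).choose i)
        + (i - 1).choose j * ((n - i * t).choose (i - 1)) := by
  have htn : t ≤ n := (Nat.le_mul_of_pos_right t hi).trans (by omega)
  exact stmt_10_general n t i j (by omega) htn hi
end
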